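/- arXiv:1712.04730 — 3 statements merged into one kernel-verified Lean document; each statement's English description precedes it below -/
import Mathlib

section
/- Fix an integer n ≥ 1 and a real ψ with 0 < ψ < 1. Then, as ω → 0 from the right, the mean E_{n,ψ,ω} of the (L)MBD(ψ,ω) tends to n ψ^n / (ψ^n + (1−ψ)^n). -/
open Filter Finset

/-- `K n a ψ ω = Σ_{i=0}^{n−a} C(n−a,i) ψ^i (1−ψ)^{n−a−i} ω^{(n−a−i)(i+a)}`. -/
noncomputable def K (n a : ℕ) (ψ ω : ℝ) : ℝ :=
  ∑ i ∈ Finset.range (n - a + 1),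
    (Nat.choose (n - a) i : ℝ) * ψ ^ i * (1 - ψ) ^ (n - a - i) * ω ^ ((n - a - i) * (i + a))

/-- `τ j = K n j / K n 0`. -/
noncomputable def τ (n j : ℕ) (ψ ω : ℝ) : ℝ := K n j ψ ω / K n 0 ψ ω

/-- pmf of the (L)MBD. -/
noncomputable def lmbd (n : ℕ) (ψ ω : ℝ) (y : ℕ) : ℝ :=
  (Nat.choose n y : ℝ) * ψ ^ y * (1 - ψ) ^ (n - y) * ω ^ ((n - y) * y) / K n 0 ψ ω

/-- mean of the (L)MBD. -/
noncomputable def lmbdMean (n : ℕ) (ψ ω : ℝ) : ℝ :=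
  ∑ y ∈ Finset.range (n + 1), (y : ℝ) * lmbd n ψ ω y

/-- variance of the (L)MBD. -/
noncomputable def lmbdVar (n : ℕ) (ψ ω : ℝ) : ℝ :=
  ∑ y ∈ Finset.range (n + 1), ((y : ℝ) - lmbdMean n ψ ω) ^ 2 * lmbd n ψ ω y

/-- At `ω = 0` only the two extreme terms of an `ω ^ ((n - y) * y)`-weighted sum survive. -/
theorem sum_range_mul_zero_pow {n : ℕ} (hn : 1 ≤ n) (f : ℕ → ℝ) :
    ∑ y ∈ Finset.range (n + 1), f y * (0 : ℝ) ^ ((n - y) * y) = f n + f 0 := by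
  obtain ⟨m, rfl⟩ := Nat.exists_eq_add_of_le' hn
  rw [Finset.sum_range_succ, Finset.sum_range_succ', Finset.sum_eq_zero]
  · simp [add_comm]
  · intro y hy
    have hy' : y < m := Finset.mem_range.mp hy
    rw [zero_pow (Nat.mul_ne_zero (by omega) (by omega)), mul_zero]

theorem K_zero_zero {n : ℕ} (hn : 1 ≤ n) (ψ : ℝ) : K n 0 ψ 0 = ψ ^ n + (1 - ψ) ^ n := by
  simpa [K] using sum_range_mul_zero_pow hn
    (fun y => (Nat.choose n y : ℝ) * ψ ^ y * (1 - ψ) ^ (n - y))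

theorem lmbdMean_zero {n : ℕ} (hn : 1 ≤ n) (ψ : ℝ) :
    lmbdMean n ψ 0 = (n : ℝ) * ψ ^ n / (ψ ^ n + (1 - ψ) ^ n) := by
  have h := sum_range_mul_zero_pow hn
    (fun y => (y : ℝ) * ((Nat.choose n y : ℝ) * ψ ^ y * (1 - ψ) ^ (n - y)))
  simp only [lmbdMean, lmbd, K_zero_zero hn, ← mul_div_assoc, ← Finset.sum_div, ← mul_assoc] at h ⊢
  rw [h]
  simp

theorem continuous_K (n a : ℕ) (ψ : ℝ) : Continuous (K n a ψ) := by
  unfold K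
  fun_prop

theorem continuousAt_lmbdMean {n : ℕ} {ψ ω : ℝ} (h : K n 0 ψ ω ≠ 0) :
    ContinuousAt (lmbdMean n ψ) ω := by
  have hK : ContinuousAt (K n 0 ψ) ω := (continuous_K n 0 ψ).continuousAt
  unfold lmbdMean lmbd
  fun_prop (disch := assumption)

theorem stmt_4 (n : ℕ) (hn : 1 ≤ n) (ψ : ℝ) (hψ0 : 0 < ψ) (hψ1 : ψ < 1) :
    Filter.Tendsto (fun ω : ℝ => lmbdMean n ψ ω) (nhdsWithin 0 (Set.Ioi 0))
      (nhds ((n : ℝ) * ψ ^ n / (ψ ^ n + (1 - ψ) ^ n))) := by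
  have hK : K n 0 ψ 0 ≠ 0 := by
    have h1 : 0 < 1 - ψ := sub_pos.mpr hψ1
    rw [K_zero_zero hn]
    positivity
  rw [← lmbdMean_zero hn]
  exact (continuousAt_lmbdMean hK).tendsto.mono_left nhdsWithin_le_nhds
end

section
/- Let n ≥ 2 be an even integer and let ψ be a real with 0 < ψ < 1. Then, as ω → +∞, the mean E_{n,ψ,ω} of the (L)MBD(ψ,ω) tends to n/2 and its variance V_{n,ψ,ω} tends to 0. -/
open Filter Finset

/-- The normalized power `ω ^ ((m + m - y) * y) / ω ^ (m * m)` concentrates at `y = m`. -/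
lemma tendsto_pow_div_pow_center {m y : ℕ} (hy : y ≤ m + m) :
    Tendsto (fun ω : ℝ => ω ^ ((m + m - y) * y) / ω ^ (m * m)) atTop
      (nhds (if y = m then 1 else 0)) := by
  split_ifs with h
  · subst h
    refine tendsto_const_nhds.congr' ?_
    filter_upwards [eventually_gt_atTop 0] with ω hω
    rw [Nat.add_sub_cancel, div_self (by positivity)]
  · refine tendsto_pow_div_pow_atTop_zero ?_
    obtain ⟨k, hk⟩ := Nat.exists_eq_add_of_le hy
    have hsub : m + m - y = k := by omega
    rw [hsub]
    rcases lt_or_gt_of_ne h with h | h <;> nlinarith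

/-- The normalizing constant has the order of its central term. -/
lemma tendsto_K_div_pow (m : ℕ) (ψ : ℝ) :
    Tendsto (fun ω : ℝ => K (m + m) 0 ψ ω / ω ^ (m * m)) atTop
      (nhds ((Nat.choose (m + m) m : ℝ) * ψ ^ m * (1 - ψ) ^ m)) := by
  have h : Tendsto (fun ω : ℝ => ∑ i ∈ range (m + m + 1),
      (Nat.choose (m + m) i : ℝ) * ψ ^ i * (1 - ψ) ^ (m + m - i) *
        (ω ^ ((m + m - i) * i) / ω ^ (m * m))) atTop
      (nhds (∑ i ∈ range (m + m + 1),
        (Nat.choose (m + m) i : ℝ) * ψ ^ i * (1 - ψ) ^ (m + m - i) *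
          (if i = m then 1 else 0))) :=
    tendsto_finsetSum _ fun i hi =>
      (tendsto_pow_div_pow_center (Nat.lt_succ_iff.mp (mem_range.mp hi))).const_mul _
  have hm : m < m + m + 1 := by omega
  simpa [K, Finset.sum_div, mul_div_assoc, hm] using h

/-- For even size, the probability mass function converges to the point mass at the center. -/
lemma tendsto_lmbd {m y : ℕ} (hy : y ≤ m + m) {ψ : ℝ} (hψ0 : 0 < ψ) (hψ1 : ψ < 1) :
    Tendsto (fun ω : ℝ => lmbd (m + m) ψ ω y) atTop (nhds (if y = m then 1 else 0)) := by
  have hc : (Nat.choose (m + m) m : ℝ) * ψ ^ m * (1 - ψ) ^ m ≠ 0 := by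
    have h1 : 0 < 1 - ψ := sub_pos.mpr hψ1
    have h2 : 0 < Nat.choose (m + m) m := Nat.choose_pos (by omega)
    positivity
  have h := ((tendsto_pow_div_pow_center hy).const_mul
    ((Nat.choose (m + m) y : ℝ) * ψ ^ y * (1 - ψ) ^ (m + m - y))).div (tendsto_K_div_pow m ψ) hc
  have hlim : (Nat.choose (m + m) y : ℝ) * ψ ^ y * (1 - ψ) ^ (m + m - y) *
      (if y = m then 1 else 0) / ((Nat.choose (m + m) m : ℝ) * ψ ^ m * (1 - ψ) ^ m) =
      if y = m then 1 else 0 := by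
    split_ifs with hym
    · subst hym
      rw [Nat.add_sub_cancel, mul_one, div_self hc]
    · simp
  rw [hlim] at h
  refine h.congr' ?_
  filter_upwards [eventually_gt_atTop 0] with ω hω
  have hpow : ω ^ (m * m) ≠ 0 := by positivity
  simp only [Pi.div_apply, lmbd, ← mul_div_assoc]
  exact div_div_div_cancel_right₀ hpow _ _

/-- Expectations of convergent functions converge to the limit value at the center. -/
lemma tendsto_sum_mul_lmbd (m : ℕ) {ψ : ℝ} (hψ0 : 0 < ψ) (hψ1 : ψ < 1)
    {f : ℕ → ℝ → ℝ} {g : ℕ → ℝ} (hf : ∀ y, Tendsto (f y) atTop (nhds (g y))) :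
    Tendsto (fun ω : ℝ => ∑ y ∈ range (m + m + 1), f y ω * lmbd (m + m) ψ ω y) atTop
      (nhds (g m)) := by
  have h := tendsto_finsetSum (range (m + m + 1)) fun y hy =>
    (hf y).mul (tendsto_lmbd (Nat.lt_succ_iff.mp (mem_range.mp hy)) hψ0 hψ1)
  have hm : m < m + m + 1 := by omega
  simpa [hm] using h

theorem stmt_10 (n : ℕ) (hn : 2 ≤ n) (hne : Even n)
    (ψ : ℝ) (hψ0 : 0 < ψ) (hψ1 : ψ < 1) :
    Filter.Tendsto (fun ω : ℝ => lmbdMean n ψ ω) Filter.atTop (nhds ((n : ℝ) / 2)) ∧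
    Filter.Tendsto (fun ω : ℝ => lmbdVar n ψ ω) Filter.atTop (nhds 0) := by
  obtain ⟨m, rfl⟩ := hne
  have hhalf : ((m + m : ℕ) : ℝ) / 2 = m := by push_cast; ring
  rw [hhalf]
  have hmean : Tendsto (fun ω : ℝ => lmbdMean (m + m) ψ ω) atTop (nhds (m : ℝ)) :=
    tendsto_sum_mul_lmbd m hψ0 hψ1 (f := fun y _ => (y : ℝ)) (g := fun y => (y : ℝ))
      fun _ => tendsto_const_nhds
  refine ⟨hmean, ?_⟩
  have hvar := tendsto_sum_mul_lmbd m hψ0 hψ1 fun y : ℕ =>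
    ((tendsto_const_nhds (x := (y : ℝ))).sub hmean).pow 2
  simpa [lmbdVar] using hvar
end

section
/- Let n ≥ 2 be an integer, let ψ be a real with 0 < ψ < 1 and let ω be a real with ω > 0. Then K_{n,1}(ψ,ω) ≤ K_{n,0}(ψ,ω) (equivalently τ_1(ψ,ω) ≤ 1, equivalently π = ψ τ_1(ψ,ω) ≤ ψ) if and only if (2ψ − 1)(ω − 1) ≥ 0, i.e. if and only if either (ψ ≤ 1/2 and ω ≤ 1) or (ψ ≥ 1/2 and ω ≥ 1). -/
open Filter Finset

/-- For `k < j`, the antisymmetric difference `x ^ j * y ^ k - x ^ k * y ^ j` is a positive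
multiple of `x - y`. -/
lemma exists_pos_mul_sub_eq {j k : ℕ} (h : k < j) {x y : ℝ} (hx : 0 < x) (hy : 0 < y) :
    ∃ c : ℝ, 0 < c ∧ x ^ j * y ^ k - x ^ k * y ^ j = c * (x - y) := by
  obtain ⟨d, rfl⟩ := Nat.exists_eq_add_of_lt h
  refine ⟨(x * y) ^ k * ∑ i ∈ range (d + 1), x ^ i * y ^ (d + 1 - 1 - i), ?_, ?_⟩
  · exact mul_pos (by positivity) (sum_pos (fun i _ => by positivity) ⟨0, by simp⟩)
  · rw [mul_assoc, geom_sum₂_mul]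
    ring

/-- The product of two antisymmetric differences with the same exponents is a nonnegative
multiple of the product of the differences of the bases, positive for distinct exponents. -/
lemma exists_nonneg_mul_sub_mul_sub_eq (j k : ℕ) {x y z w : ℝ} (hx : 0 < x) (hy : 0 < y)
    (hz : 0 < z) (hw : 0 < w) :
    ∃ c : ℝ, 0 ≤ c ∧ (j ≠ k → 0 < c) ∧
      (x ^ j * y ^ k - x ^ k * y ^ j) * (z ^ j * w ^ k - z ^ k * w ^ j) =
        c * ((x - y) * (z - w)) := by
  rcases lt_trichotomy k j with h | rfl | h
  · obtain ⟨c, hc, hc'⟩ := exists_pos_mul_sub_eq h hx hy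
    obtain ⟨d, hd, hd'⟩ := exists_pos_mul_sub_eq h hz hw
    exact ⟨c * d, by positivity, fun _ => by positivity, by rw [hc', hd']; ring⟩
  · exact ⟨0, le_rfl, fun h => absurd rfl h, by ring⟩
  · obtain ⟨c, hc, hc'⟩ := exists_pos_mul_sub_eq h hx hy
    obtain ⟨d, hd, hd'⟩ := exists_pos_mul_sub_eq h hz hw
    refine ⟨c * d, by positivity, fun _ => by positivity, ?_⟩
    linear_combination (x ^ k * y ^ j - x ^ j * y ^ k) * hd' + d * (z - w) * hc'

/-- Pascal's rule applied to `K (m + 1) 0`. -/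
lemma K_zero_sub_K_one (m : ℕ) (ψ ω : ℝ) :
    K (m + 1) 0 ψ ω - K (m + 1) 1 ψ ω = (1 - ψ) * ∑ j ∈ range (m + 1),
      (m.choose j : ℝ) * ω ^ (j * (m - j)) * (ω ^ j - ω ^ (m - j)) *
        (ψ ^ j * (1 - ψ) ^ (m - j)) := by
  have h := sum_choose_succ_mul (fun i k => ψ ^ i * (1 - ψ) ^ k * ω ^ (k * i)) m
  have h0 : K (m + 1) 0 ψ ω = ∑ i ∈ range (m + 2),
      ((m + 1).choose i : ℝ) * (ψ ^ i * (1 - ψ) ^ (m + 1 - i) * ω ^ ((m + 1 - i) * i)) := by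
    simp only [K, Nat.sub_zero, add_zero, mul_assoc]
  rw [h0, h, K, Nat.add_sub_cancel, ← sum_add_distrib, ← sum_sub_distrib, mul_sum]
  refine sum_congr rfl fun j hj => ?_
  obtain ⟨k, rfl⟩ := Nat.exists_eq_add_of_le (Nat.lt_succ_iff.mp (mem_range.mp hj))
  rw [show j + k + 1 - j = k + 1 by omega, Nat.add_sub_cancel_left]
  ring

/-- Symmetrization under `j ↦ m - j`. -/
lemma two_mul_sum_choose_eq (m : ℕ) (ψ ω : ℝ) :
    2 * ∑ j ∈ range (m + 1), (m.choose j : ℝ) * ω ^ (j * (m - j)) * (ω ^ j - ω ^ (m - j)) *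
        (ψ ^ j * (1 - ψ) ^ (m - j)) =
      ∑ j ∈ range (m + 1), (m.choose j : ℝ) * ω ^ (j * (m - j)) *
        ((ω ^ j * 1 ^ (m - j) - ω ^ (m - j) * 1 ^ j) *
          (ψ ^ j * (1 - ψ) ^ (m - j) - ψ ^ (m - j) * (1 - ψ) ^ j)) := by
  rw [two_mul]
  nth_rewrite 2 [← sum_range_reflect]
  rw [← sum_add_distrib]
  refine sum_congr rfl fun j hj => ?_
  have hjm : j ≤ m := Nat.lt_succ_iff.mp (mem_range.mp hj)
  rw [show m + 1 - 1 - j = m - j by omega, Nat.choose_symm hjm, Nat.sub_sub_self hjm]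
  ring

/-- `K n 0 - K n 1` is a positive multiple of `(2 * ψ - 1) * (ω - 1)`. -/
lemma exists_pos_K_zero_sub_K_one_eq {n : ℕ} (hn : 2 ≤ n) {ψ ω : ℝ} (hψ0 : 0 < ψ) (hψ1 : ψ < 1)
    (hω : 0 < ω) :
    ∃ c : ℝ, 0 < c ∧ K n 0 ψ ω - K n 1 ψ ω = c * ((2 * ψ - 1) * (ω - 1)) := by
  obtain ⟨m, rfl⟩ : ∃ m, n = m + 1 := ⟨n - 1, by omega⟩
  have hq : 0 < 1 - ψ := sub_pos.mpr hψ1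
  choose c hc hc_pos hc_eq using fun j : ℕ =>
    exists_nonneg_mul_sub_mul_sub_eq j (m - j) hω one_pos hψ0 hq
  refine ⟨(1 - ψ) / 2 * ∑ j ∈ range (m + 1), (m.choose j : ℝ) * ω ^ (j * (m - j)) * c j, ?_, ?_⟩
  · refine mul_pos (by positivity) (sum_pos' (fun j _ => ?_) ⟨m, by simp, ?_⟩)
    · exact mul_nonneg (by positivity) (hc j)
    · simpa using hc_pos m (by omega)
  · have h := two_mul_sum_choose_eq m ψ ω
    simp only [hc_eq, ← mul_assoc _ (c _), ← sum_mul] at h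
    rw [K_zero_sub_K_one]
    linear_combination (1 - ψ) / 2 * h

lemma K_pos (n a : ℕ) {ψ ω : ℝ} (hψ0 : 0 < ψ) (hψ1 : ψ < 1) (hω : 0 < ω) : 0 < K n a ψ ω := by
  have hq : 0 < 1 - ψ := sub_pos.mpr hψ1
  refine sum_pos (fun i hi => ?_) ⟨0, by simp⟩
  have : 0 < (n - a).choose i := Nat.choose_pos (Nat.lt_succ_iff.mp (mem_range.mp hi))
  positivity

theorem stmt_17 (n : ℕ) (hn : 2 ≤ n) (ψ : ℝ) (hψ0 : 0 < ψ) (hψ1 : ψ < 1)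
    (ω : ℝ) (hω : 0 < ω) :
    (K n 1 ψ ω ≤ K n 0 ψ ω ↔ (2 * ψ - 1) * (ω - 1) ≥ 0) ∧
    (τ n 1 ψ ω ≤ 1 ↔ (2 * ψ - 1) * (ω - 1) ≥ 0) ∧
    (ψ * τ n 1 ψ ω ≤ ψ ↔ (2 * ψ - 1) * (ω - 1) ≥ 0) ∧
    ((2 * ψ - 1) * (ω - 1) ≥ 0 ↔ (ψ ≤ 1 / 2 ∧ ω ≤ 1) ∨ (1 / 2 ≤ ψ ∧ 1 ≤ ω)) := by
  have h_iff : K n 1 ψ ω ≤ K n 0 ψ ω ↔ (2 * ψ - 1) * (ω - 1) ≥ 0 := by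
    obtain ⟨c, hc, h⟩ := exists_pos_K_zero_sub_K_one_eq hn hψ0 hψ1 hω
    rw [← sub_nonneg, h, mul_nonneg_iff_of_pos_left hc]
  have h_tau : τ n 1 ψ ω ≤ 1 ↔ (2 * ψ - 1) * (ω - 1) ≥ 0 := by
    rw [τ, div_le_one (K_pos n 0 hψ0 hψ1 hω), h_iff]
  refine ⟨h_iff, h_tau, by rw [mul_le_iff_le_one_right hψ0, h_tau], ?_⟩
  rw [ge_iff_le, mul_nonneg_iff, or_comm]
  refine or_congr (and_congr ?_ ?_) (and_congr ?_ ?_) <;> constructor <;> intro h <;> linarith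
end
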